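/- arXiv:1012.0257 — 5 statements merged into one kernel-verified Lean document; each statement's English description precedes it below -/
import Mathlib

section
/- For every p = (x,y,z) ∈ ℝ³ with p ≠ 0, the squared length of the sub-gradient of the Folland–Kaplan gauge satisfies (X₁N)(p)² + (X₂N)(p)² = (x² + y²) / N(p)², where (X_iN)(p) = DN(p)(X_i(p)) is the derivative of N along X_i. -/
/-- Heisenberg vector field `X₁(x,y,z) = (1, 0, −y/2)`. -/
noncomputable def heisX1 : ℝ × ℝ × ℝ → ℝ × ℝ × ℝ := fun p => (1, 0, -p.2.1 / 2)

/-- Heisenberg vector field `X₂(x,y,z) = (0, 1, x/2)`. -/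
noncomputable def heisX2 : ℝ × ℝ × ℝ → ℝ × ℝ × ℝ := fun p => (0, 1, p.1 / 2)

/-- The Folland–Kaplan homogeneous gauge `N(x,y,z) = ((x²+y²)² + 16z²)^{1/4}`. -/
noncomputable def fkGauge : ℝ × ℝ × ℝ → ℝ :=
  fun p => ((p.1 ^ 2 + p.2.1 ^ 2) ^ 2 + 16 * p.2.2 ^ 2) ^ ((1 : ℝ) / 4)

theorem subgradient_of_gauge (p : ℝ × ℝ × ℝ) (hp : p ≠ 0) :
    (fderiv ℝ fkGauge p (heisX1 p)) ^ 2 + (fderiv ℝ fkGauge p (heisX2 p)) ^ 2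
      = (p.1 ^ 2 + p.2.1 ^ 2) / (fkGauge p) ^ 2 := by
  obtain ⟨x, y, z⟩ := p
  have hg : 0 < (x ^ 2 + y ^ 2) ^ 2 + 16 * z ^ 2 := by
    by_contra hcon
    apply hp
    have hz : z = 0 := by
      have : z ^ 2 = 0 := by nlinarith [sq_nonneg (x ^ 2 + y ^ 2), sq_nonneg z]
      exact pow_eq_zero_iff (two_ne_zero) |>.1 this
    have hr : x ^ 2 + y ^ 2 = 0 := by
      have : (x ^ 2 + y ^ 2) ^ 2 = 0 := by nlinarith [sq_nonneg (x ^ 2 + y ^ 2), sq_nonneg z]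
      exact pow_eq_zero_iff (two_ne_zero) |>.1 this
    have hx : x = 0 := by
      have : x ^ 2 = 0 := by nlinarith [sq_nonneg x, sq_nonneg y]
      exact pow_eq_zero_iff (two_ne_zero) |>.1 this
    have hy : y = 0 := by
      have : y ^ 2 = 0 := by nlinarith [sq_nonneg x, sq_nonneg y]
      exact pow_eq_zero_iff (two_ne_zero) |>.1 this
    simp [hx, hy, hz]
  have h1 : HasFDerivAt (fun q : ℝ × ℝ × ℝ => q.1)
      (ContinuousLinearMap.fst ℝ ℝ (ℝ × ℝ)) (x, y, z) := hasFDerivAt_fst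
  have h2' : HasFDerivAt (fun q : ℝ × ℝ × ℝ => q.2)
      (ContinuousLinearMap.snd ℝ ℝ (ℝ × ℝ)) (x, y, z) := hasFDerivAt_snd
  have h2 := h2'.fst
  have h3 := h2'.snd
  have hN := ((((h1.pow 2).add (h2.pow 2)).pow 2).add ((h3.pow 2).const_mul 16)).rpow_const
    (p := (1 : ℝ) / 4) (Or.inl hg.ne')
  have hN' : HasFDerivAt fkGauge _ (x, y, z) := hN
  rw [hN'.fderiv]
  have hrw : ((x ^ 2 + y ^ 2) ^ 2 + 16 * z ^ 2) ^ ((1 : ℝ) / 4 - 1)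
      = ((x ^ 2 + y ^ 2) ^ 2 + 16 * z ^ 2) ^ ((1 : ℝ) / 4) / ((x ^ 2 + y ^ 2) ^ 2 + 16 * z ^ 2) :=
    Real.rpow_sub_one hg.ne' _
  have h4 : (((x ^ 2 + y ^ 2) ^ 2 + 16 * z ^ 2) ^ ((1 : ℝ) / 4)) ^ 4
      = (x ^ 2 + y ^ 2) ^ 2 + 16 * z ^ 2 := by
    rw [← Real.rpow_natCast, ← Real.rpow_mul hg.le]
    norm_num
  have hpos := Real.rpow_pos_of_pos hg ((1 : ℝ) / 4)
  simp only [heisX1, heisX2, fkGauge, Pi.add_apply, Pi.pow_apply, hrw]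
  generalize ((x ^ 2 + y ^ 2) ^ 2 + 16 * z ^ 2) ^ ((1 : ℝ) / 4) = N at *
  rw [← h4]
  simp
  field_simp
  linear_combination (-16 * (x ^ 2 + y ^ 2)) * h4
end

section
/- For every p = (x,y,z) ∈ ℝ³ with p ≠ 0, the sub-Laplacian of the Folland–Kaplan gauge satisfies (X₁(X₁N))(p) + (X₂(X₂N))(p) = 3(x² + y²) / N(p)³, where for a vector field V and smooth function f, (Vf)(q) = Df(q)(V(q)), and V(Vf) is obtained by applying V again to the function q ↦ (Vf)(q). -/
/-- Derivative of a function `f : ℝ³ → ℝ` along a vector field `V`: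
`(Vf)(q) = Df(q)(V(q))`. -/
noncomputable def vderiv3 (V : ℝ × ℝ × ℝ → ℝ × ℝ × ℝ) (f : ℝ × ℝ × ℝ → ℝ) :
    ℝ × ℝ × ℝ → ℝ :=
  fun q => fderiv ℝ f q (V q)

noncomputable def gPoly : ℝ × ℝ × ℝ → ℝ :=
  fun p => (p.1 ^ 2 + p.2.1 ^ 2) ^ 2 + 16 * p.2.2 ^ 2

lemma gPoly_pos {p : ℝ × ℝ × ℝ} (hp : p ≠ 0) : 0 < gPoly p := by
  obtain ⟨x, y, z⟩ := p
  unfold gPoly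
  by_contra h
  simp only at h
  apply hp
  have hz : z = 0 := by
    have : z ^ 2 = 0 := by nlinarith [sq_nonneg (x ^ 2 + y ^ 2), sq_nonneg z]
    simpa using this
  have hr : x ^ 2 + y ^ 2 = 0 := by
    have : (x ^ 2 + y ^ 2) ^ 2 = 0 := by nlinarith [sq_nonneg (x ^ 2 + y ^ 2), sq_nonneg z]
    simpa using this
  have hx : x = 0 := by
    have : x ^ 2 = 0 := by nlinarith [sq_nonneg x, sq_nonneg y]
    simpa using this
  have hy : y = 0 := by
    have : y ^ 2 = 0 := by nlinarith [sq_nonneg x, sq_nonneg y]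
    simpa using this
  simp [hx, hy, hz]

lemma diff_gPoly : Differentiable ℝ gPoly := by
  unfold gPoly; fun_prop

/-- directional derivatives are derivatives along lines -/
lemma fderiv_line {f : ℝ × ℝ × ℝ → ℝ} {q v : ℝ × ℝ × ℝ} {c : ℝ} (hf : DifferentiableAt ℝ f q)
    (h : HasDerivAt (fun t : ℝ => f (q.1 + t * v.1, q.2.1 + t * v.2.1, q.2.2 + t * v.2.2)) c 0) :
    fderiv ℝ f q v = c := by
  rw [← hf.lineDeriv_eq_fderiv, lineDeriv]
  exact h.deriv

lemma line_aux (a b : ℝ) : HasDerivAt (fun t : ℝ => a + t * b) b 0 := by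
  simpa using ((hasDerivAt_id (0 : ℝ)).mul_const b).const_add a

lemma fderiv_gPoly (q v : ℝ × ℝ × ℝ) : fderiv ℝ gPoly q v =
    4 * (q.1 ^ 2 + q.2.1 ^ 2) * (q.1 * v.1 + q.2.1 * v.2.1) + 32 * q.2.2 * v.2.2 := by
  apply fderiv_line (diff_gPoly q)
  have h1 := line_aux q.1 v.1
  have h2 := line_aux q.2.1 v.2.1
  have h3 := line_aux q.2.2 v.2.2
  refine ((((h1.fun_pow 2).fun_add (h2.fun_pow 2)).fun_pow 2).fun_add
    ((h3.fun_pow 2).const_mul 16)).congr_deriv ?_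
  simp
  ring

lemma fderiv_rpow (q v : ℝ × ℝ × ℝ) (hq : q ≠ 0) (s : ℝ) :
    fderiv ℝ (fun p => gPoly p ^ s) q v = s * gPoly q ^ (s - 1) * fderiv ℝ gPoly q v := by
  rw [((diff_gPoly q).hasFDerivAt.rpow_const (p := s) (Or.inl (gPoly_pos hq).ne')).fderiv]
  simp

lemma second (V : ℝ × ℝ × ℝ → ℝ × ℝ × ℝ) (g : ℝ × ℝ × ℝ → ℝ) (hg : Differentiable ℝ g)
    (hV : ∀ q, fderiv ℝ gPoly q (V q) = 4 * g q) (p : ℝ × ℝ × ℝ) (hp : p ≠ 0) :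
    vderiv3 V (vderiv3 V fkGauge) p =
      gPoly p ^ (-3 / 4 : ℝ) * (fderiv ℝ g p (V p) - 3 * g p ^ 2 / gPoly p) := by
  have hev : vderiv3 V fkGauge =ᶠ[nhds p] fun q => gPoly q ^ (-3 / 4 : ℝ) * g q := by
    filter_upwards [isOpen_ne.mem_nhds hp] with q hq
    have := fderiv_rpow q (V q) hq (1 / 4)
    rw [hV] at this
    unfold vderiv3
    change fderiv ℝ (fun p => gPoly p ^ (1 / 4 : ℝ)) q (V q) = _
    rw [this]
    norm_num
    ring
  have hd : DifferentiableAt ℝ (fun q => gPoly q ^ (-3 / 4 : ℝ)) p :=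
    ((diff_gPoly p).hasFDerivAt.rpow_const (Or.inl (gPoly_pos hp).ne')).differentiableAt
  unfold vderiv3 at hev ⊢
  rw [hev.fderiv_eq, fderiv_fun_mul hd (hg p)]
  simp only [ContinuousLinearMap.add_apply, ContinuousLinearMap.smul_apply, smul_eq_mul]
  rw [fderiv_rpow p (V p) hp, hV, Real.rpow_sub_one (gPoly_pos hp).ne']
  ring

theorem sublaplacian_of_gauge (p : ℝ × ℝ × ℝ) (hp : p ≠ 0) :
    vderiv3 heisX1 (vderiv3 heisX1 fkGauge) p + vderiv3 heisX2 (vderiv3 heisX2 fkGauge) p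
      = 3 * (p.1 ^ 2 + p.2.1 ^ 2) / (fkGauge p) ^ 3 := by
  have hG := gPoly_pos hp
  have d1 : Differentiable ℝ (fun q : ℝ × ℝ × ℝ =>
      (q.1 ^ 2 + q.2.1 ^ 2) * q.1 - 4 * (q.2.2 * q.2.1)) := by fun_prop
  have d2 : Differentiable ℝ (fun q : ℝ × ℝ × ℝ =>
      (q.1 ^ 2 + q.2.1 ^ 2) * q.2.1 + 4 * (q.2.2 * q.1)) := by fun_prop
  have e1 : fderiv ℝ (fun q : ℝ × ℝ × ℝ =>
      (q.1 ^ 2 + q.2.1 ^ 2) * q.1 - 4 * (q.2.2 * q.2.1)) p (heisX1 p)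
      = 3 * (p.1 ^ 2 + p.2.1 ^ 2) := by
    apply fderiv_line (d1 p)
    have h1 := line_aux p.1 (heisX1 p).1
    have h2 := line_aux p.2.1 (heisX1 p).2.1
    have h3 := line_aux p.2.2 (heisX1 p).2.2
    refine ((((h1.fun_pow 2).fun_add (h2.fun_pow 2)).fun_mul h1).fun_sub
      ((h3.fun_mul h2).const_mul 4)).congr_deriv ?_
    simp [heisX1]
    ring
  have e2 : fderiv ℝ (fun q : ℝ × ℝ × ℝ =>
      (q.1 ^ 2 + q.2.1 ^ 2) * q.2.1 + 4 * (q.2.2 * q.1)) p (heisX2 p)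
      = 3 * (p.1 ^ 2 + p.2.1 ^ 2) := by
    apply fderiv_line (d2 p)
    have h1 := line_aux p.1 (heisX2 p).1
    have h2 := line_aux p.2.1 (heisX2 p).2.1
    have h3 := line_aux p.2.2 (heisX2 p).2.2
    refine ((((h1.fun_pow 2).fun_add (h2.fun_pow 2)).fun_mul h2).fun_add
      ((h3.fun_mul h1).const_mul 4)).congr_deriv ?_
    simp [heisX2]
    ring
  rw [second heisX1 _ d1 (fun q => by rw [fderiv_gPoly]; simp [heisX1]; ring) p hp,
    second heisX2 _ d2 (fun q => by rw [fderiv_gPoly]; simp [heisX2]; ring) p hp, e1, e2]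
  have hN : fkGauge p ^ 3 = gPoly p ^ (3 / 4 : ℝ) := by
    change (gPoly p ^ ((1 : ℝ) / 4)) ^ 3 = _
    rw [← Real.rpow_natCast, ← Real.rpow_mul hG.le]
    norm_num
  have hI : gPoly p ^ (-3 / 4 : ℝ) = (gPoly p ^ (3 / 4 : ℝ))⁻¹ := by
    rw [← Real.rpow_neg hG.le]; norm_num
  rw [hN, hI, ← mul_add, div_eq_mul_inv _ (gPoly p ^ (3 / 4 : ℝ)), mul_comm]
  congr 1
  field_simp
  simp only [gPoly]
  ring
end

section
/- Suppose the commutator coefficients are smooth functions rather than constants: [Z_k, X_j](x) = ∑_{l=1}^n c_{kjl}(x) Z_l(x) with each c_{kjl} : ℝᴺ → ℝ smooth. Then for every β > 0 there exists a continuous function κ : ℝᴺ → ℝ such that for every smooth f : ℝᴺ → ℝ and every x ∈ ℝᴺ, 2Γ(f, Lf)(x) − L(Γ(f))(x) ≤ −κ(x) Γ(f)(x). Moreover, if in addition all functions c_{kjl} and their horizontal derivatives X_j c_{kjl} are bounded on ℝᴺ, then there exists b̂₀ ∈ (0,∞) such that for every β > b̂₀ the function κ can be taken bounded below by a strictly positive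 constant. -/
open scoped BigOperators

/-- Derivative of `f` along the vector field `V`: `(Vf)(p) = Df(p)(V(p))`. -/
noncomputable def vderiv {N : ℕ}
    (V : EuclideanSpace ℝ (Fin N) → EuclideanSpace ℝ (Fin N))
    (f : EuclideanSpace ℝ (Fin N) → ℝ) : EuclideanSpace ℝ (Fin N) → ℝ :=
  fun p => fderiv ℝ f p (V p)

/-- Lie bracket of vector fields: `[V,W](p) = (DW)(p)(V(p)) − (DV)(p)(W(p))`. -/
noncomputable def lieVF {N : ℕ}
    (V W : EuclideanSpace ℝ (Fin N) → EuclideanSpace ℝ (Fin N)) :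
    EuclideanSpace ℝ (Fin N) → EuclideanSpace ℝ (Fin N) :=
  fun p => fderiv ℝ W p (V p) - fderiv ℝ V p (W p)

/-- The complete gradient form `Γ(f) = ∑_k (Z_k f)²`. -/
noncomputable def cGamma {N n : ℕ}
    (Z : Fin n → (EuclideanSpace ℝ (Fin N) → EuclideanSpace ℝ (Fin N)))
    (f : EuclideanSpace ℝ (Fin N) → ℝ) : EuclideanSpace ℝ (Fin N) → ℝ :=
  fun x => ∑ k, (vderiv (Z k) f x) ^ 2

/-- The bilinear form `Γ(f,g) = ∑_k (Z_k f)(Z_k g)`. -/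
noncomputable def cGamma2 {N n : ℕ}
    (Z : Fin n → (EuclideanSpace ℝ (Fin N) → EuclideanSpace ℝ (Fin N)))
    (f g : EuclideanSpace ℝ (Fin N) → ℝ) : EuclideanSpace ℝ (Fin N) → ℝ :=
  fun x => ∑ k, vderiv (Z k) f x * vderiv (Z k) g x

/-- The operator `Lf = ∑ᵢ Xᵢ(Xᵢf) − βDf + ∑ᵢⱼ Gᵢⱼ Xᵢ(Xⱼf) + ∑ᵢ αᵢ Xᵢf`. -/
noncomputable def opL {N m : ℕ}
    (X : Fin m → (EuclideanSpace ℝ (Fin N) → EuclideanSpace ℝ (Fin N)))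
    (D : EuclideanSpace ℝ (Fin N) → EuclideanSpace ℝ (Fin N))
    (G : Matrix (Fin m) (Fin m) ℝ)
    (α : Fin m → EuclideanSpace ℝ (Fin N) → ℝ) (β : ℝ)
    (f : EuclideanSpace ℝ (Fin N) → ℝ) : EuclideanSpace ℝ (Fin N) → ℝ :=
  fun x => ∑ i, vderiv (X i) (vderiv (X i) f) x - β * vderiv D f x
    + ∑ i, ∑ j, G i j * vderiv (X i) (vderiv (X j) f) x
    + ∑ i, α i x * vderiv (X i) f x


section CGHelpers


theorem vd_smooth {N : ℕ} {V : (EuclideanSpace ℝ (Fin N)) → (EuclideanSpace ℝ (Fin N))} {f : (EuclideanSpace ℝ (Fin N)) → ℝ}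
    (hV : ContDiff ℝ (⊤ : ℕ∞) V) (hf : ContDiff ℝ (⊤ : ℕ∞) f) :
    ContDiff ℝ (⊤ : ℕ∞) (vderiv V f) := by
  unfold vderiv
  have h : ContDiff ℝ (⊤ : ℕ∞) (fderiv ℝ f) := hf.fderiv_right (by simp)
  exact h.clm_apply hV

theorem smooth_diff {N : ℕ} {F : Type*} [NormedAddCommGroup F] [NormedSpace ℝ F]
    {f : (EuclideanSpace ℝ (Fin N)) → F} (hf : ContDiff ℝ (⊤ : ℕ∞) f) (x : EuclideanSpace ℝ (Fin N)) : DifferentiableAt ℝ f x :=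
  (hf.differentiable (by simp)) x

theorem vd_comm {N : ℕ} {V W : (EuclideanSpace ℝ (Fin N)) → (EuclideanSpace ℝ (Fin N))} {f : (EuclideanSpace ℝ (Fin N)) → ℝ}
    (hV : ContDiff ℝ (⊤ : ℕ∞) V) (hW : ContDiff ℝ (⊤ : ℕ∞) W)
    (hf : ContDiff ℝ (⊤ : ℕ∞) f) (x : EuclideanSpace ℝ (Fin N)) :
    vderiv V (vderiv W f) x = vderiv W (vderiv V f) x + fderiv ℝ f x (lieVF V W x) := by
  have h : ContDiff ℝ (⊤ : ℕ∞) (fderiv ℝ f) := hf.fderiv_right (by simp)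
  have hs : IsSymmSndFDerivAt ℝ f x := by
    apply ContDiffAt.isSymmSndFDerivAt (n := ((⊤ : ℕ∞) : WithTop ℕ∞)) hf.contDiffAt
    simp only [minSmoothness_of_isRCLikeNormedField]
    exact WithTop.coe_le_coe.2 le_top
  have hd : ∀ W : (EuclideanSpace ℝ (Fin N)) → (EuclideanSpace ℝ (Fin N)), ContDiff ℝ (⊤ : ℕ∞) W → ∀ v,
      fderiv ℝ (fun p => fderiv ℝ f p (W p)) x v
        = fderiv ℝ (fderiv ℝ f) x v (W x) + fderiv ℝ f x (fderiv ℝ W x v) := by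
    intro W hW v
    rw [fderiv_clm_apply (smooth_diff h x) (smooth_diff hW x)]
    simp [add_comm]
  unfold vderiv lieVF
  rw [hd W hW, hd V hV, map_sub, hs.eq]
  ring

theorem vd_add {N : ℕ} (V : (EuclideanSpace ℝ (Fin N)) → (EuclideanSpace ℝ (Fin N))) {f g : (EuclideanSpace ℝ (Fin N)) → ℝ}
    (hf : ContDiff ℝ (⊤ : ℕ∞) f) (hg : ContDiff ℝ (⊤ : ℕ∞) g) (x : EuclideanSpace ℝ (Fin N)) :
    vderiv V (fun p => f p + g p) x = vderiv V f x + vderiv V g x := by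
  unfold vderiv
  rw [fderiv_fun_add (smooth_diff hf x) (smooth_diff hg x)]; rfl

theorem vd_mul {N : ℕ} (V : (EuclideanSpace ℝ (Fin N)) → (EuclideanSpace ℝ (Fin N))) {f g : (EuclideanSpace ℝ (Fin N)) → ℝ}
    (hf : ContDiff ℝ (⊤ : ℕ∞) f) (hg : ContDiff ℝ (⊤ : ℕ∞) g) (x : EuclideanSpace ℝ (Fin N)) :
    vderiv V (fun p => f p * g p) x = vderiv V f x * g x + f x * vderiv V g x := by
  unfold vderiv
  rw [fderiv_fun_mul (smooth_diff hf x) (smooth_diff hg x)]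
  simp; ring

theorem vd_cmul {N : ℕ} (V : (EuclideanSpace ℝ (Fin N)) → (EuclideanSpace ℝ (Fin N))) (a : ℝ) {g : (EuclideanSpace ℝ (Fin N)) → ℝ}
    (hg : ContDiff ℝ (⊤ : ℕ∞) g) (x : EuclideanSpace ℝ (Fin N)) :
    vderiv V (fun p => a * g p) x = a * vderiv V g x := by
  rw [vd_mul V contDiff_const hg]
  simp [vderiv]

theorem vd_sum {N : ℕ} {ι : Type*} [Fintype ι] (V : (EuclideanSpace ℝ (Fin N)) → (EuclideanSpace ℝ (Fin N))) {f : ι → (EuclideanSpace ℝ (Fin N)) → ℝ}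
    (hf : ∀ i, ContDiff ℝ (⊤ : ℕ∞) (f i)) (x : EuclideanSpace ℝ (Fin N)) :
    vderiv V (fun p => ∑ i, f i p) x = ∑ i, vderiv V (f i) x := by
  unfold vderiv
  rw [fderiv_fun_sum (fun i _ => smooth_diff (hf i) x)]
  simp

/-- The full coefficient matrix `G + I`. -/
noncomputable def Amat {m : ℕ} (G : Matrix (Fin m) (Fin m) ℝ) (i j : Fin m) : ℝ :=
  G i j + if i = j then 1 else 0

theorem opL_eq {N m : ℕ} (X : Fin m → (EuclideanSpace ℝ (Fin N)) → (EuclideanSpace ℝ (Fin N))) (D : (EuclideanSpace ℝ (Fin N)) → (EuclideanSpace ℝ (Fin N)))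
    (G : Matrix (Fin m) (Fin m) ℝ) (α : Fin m → (EuclideanSpace ℝ (Fin N)) → ℝ) (β : ℝ) (f : (EuclideanSpace ℝ (Fin N)) → ℝ) :
    opL X D G α β f = fun x => (∑ i, ∑ j, Amat G i j * vderiv (X i) (vderiv (X j) f) x)
      + (-β) * vderiv D f x + ∑ i, α i x * vderiv (X i) f x := by
  funext x
  unfold opL Amat
  simp only [add_mul, Finset.sum_add_distrib, ite_mul, one_mul, zero_mul, Finset.sum_ite_eq,
    Finset.mem_univ, if_true]
  ring

theorem vd_opL {N m : ℕ} {X : Fin m → (EuclideanSpace ℝ (Fin N)) → (EuclideanSpace ℝ (Fin N))} {D V : (EuclideanSpace ℝ (Fin N)) → (EuclideanSpace ℝ (Fin N))}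
    (G : Matrix (Fin m) (Fin m) ℝ) {α : Fin m → (EuclideanSpace ℝ (Fin N)) → ℝ} (β : ℝ) {f : (EuclideanSpace ℝ (Fin N)) → ℝ}
    (hX : ∀ i, ContDiff ℝ (⊤ : ℕ∞) (X i)) (hD : ContDiff ℝ (⊤ : ℕ∞) D)
    (hα : ∀ i, ContDiff ℝ (⊤ : ℕ∞) (α i)) (hf : ContDiff ℝ (⊤ : ℕ∞) f) (x : EuclideanSpace ℝ (Fin N)) :
    vderiv V (opL X D G α β f) x
      = (∑ i, ∑ j, Amat G i j * vderiv V (vderiv (X i) (vderiv (X j) f)) x)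
      + (-β) * vderiv V (vderiv D f) x
      + ∑ i, (vderiv V (α i) x * vderiv (X i) f x + α i x * vderiv V (vderiv (X i) f) x) := by
  have h1 : ∀ i, ContDiff ℝ (⊤ : ℕ∞) (vderiv (X i) f) := fun i => vd_smooth (hX i) hf
  have h2 : ∀ i j, ContDiff ℝ (⊤ : ℕ∞) (vderiv (X i) (vderiv (X j) f)) :=
    fun i j => vd_smooth (hX i) (h1 j)
  have h3 : ContDiff ℝ (⊤ : ℕ∞) (vderiv D f) := vd_smooth hD hf
  have h4 : ∀ i j, ContDiff ℝ (⊤ : ℕ∞) (fun x => Amat G i j * vderiv (X i) (vderiv (X j) f) x) :=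
    fun i j => contDiff_const.mul (h2 i j)
  have h5 : ∀ i, ContDiff ℝ (⊤ : ℕ∞) (fun x => ∑ j, Amat G i j * vderiv (X i) (vderiv (X j) f) x) :=
    fun i => ContDiff.sum fun j _ => h4 i j
  have h6 : ContDiff ℝ (⊤ : ℕ∞)
      (fun x => ∑ i, ∑ j, Amat G i j * vderiv (X i) (vderiv (X j) f) x) :=
    ContDiff.sum fun i _ => h5 i
  have h7 : ContDiff ℝ (⊤ : ℕ∞) (fun x => (-β) * vderiv D f x) := contDiff_const.mul h3
  have h8 : ∀ i, ContDiff ℝ (⊤ : ℕ∞) (fun x => α i x * vderiv (X i) f x) :=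
    fun i => (hα i).mul (h1 i)
  rw [opL_eq, vd_add V (h6.add h7) (ContDiff.sum fun i _ => h8 i), vd_add V h6 h7,
    vd_sum V h5, vd_cmul V _ h3, vd_sum V h8]
  congr 1
  · congr 1
    refine Finset.sum_congr rfl fun i _ => ?_
    rw [vd_sum V (h4 i)]
    refine Finset.sum_congr rfl fun j _ => ?_
    rw [vd_cmul V _ (h2 i j)]
  · refine Finset.sum_congr rfl fun i _ => ?_
    rw [vd_mul V (hα i) (h1 i)]

theorem vd_gamma {N n : ℕ} (V : (EuclideanSpace ℝ (Fin N)) → (EuclideanSpace ℝ (Fin N))) {u : Fin n → (EuclideanSpace ℝ (Fin N)) → ℝ}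
    (hu : ∀ k, ContDiff ℝ (⊤ : ℕ∞) (u k)) :
    vderiv V (fun x => ∑ k, (u k x) ^ 2) = fun x => ∑ k, 2 * (u k x * vderiv V (u k) x) := by
  funext x
  rw [vd_sum V (fun k => (hu k).pow 2)]
  refine Finset.sum_congr rfl fun k _ => ?_
  simp only [pow_two]
  rw [vd_mul V (hu k) (hu k)]; ring

theorem opL_gamma {N m n : ℕ} {X : Fin m → (EuclideanSpace ℝ (Fin N)) → (EuclideanSpace ℝ (Fin N))} {D : (EuclideanSpace ℝ (Fin N)) → (EuclideanSpace ℝ (Fin N))}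
    (G : Matrix (Fin m) (Fin m) ℝ) (α : Fin m → (EuclideanSpace ℝ (Fin N)) → ℝ) (β : ℝ)
    (hX : ∀ i, ContDiff ℝ (⊤ : ℕ∞) (X i))
    {u : Fin n → (EuclideanSpace ℝ (Fin N)) → ℝ} (hu : ∀ k, ContDiff ℝ (⊤ : ℕ∞) (u k)) (x : EuclideanSpace ℝ (Fin N)) :
    opL X D G α β (fun x => ∑ k, (u k x) ^ 2) x
      = ∑ k, (2 * u k x * opL X D G α β (u k) x
        + 2 * ∑ i, ∑ j, Amat G i j * (vderiv (X i) (u k) x * vderiv (X j) (u k) x)) := by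
  have h1 : ∀ i k, ContDiff ℝ (⊤ : ℕ∞) (vderiv (X i) (u k)) := fun i k => vd_smooth (hX i) (hu k)
  have h2 : ∀ i j, vderiv (X i) (vderiv (X j) (fun x => ∑ k, (u k x) ^ 2)) x
      = ∑ k, 2 * (vderiv (X i) (u k) x * vderiv (X j) (u k) x
        + u k x * vderiv (X i) (vderiv (X j) (u k)) x) := by
    intro i j
    rw [vd_gamma _ hu, vd_sum _ (fun k => contDiff_const.mul ((hu k).mul (h1 j k)))]
    refine Finset.sum_congr rfl fun k _ => ?_
    rw [vd_cmul _ _ ((hu k).mul (h1 j k)), vd_mul _ (hu k) (h1 j k)]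
  have e1 : ∑ i, ∑ j, Amat G i j * (∑ k, 2 * (vderiv (X i) (u k) x * vderiv (X j) (u k) x
        + u k x * vderiv (X i) (vderiv (X j) (u k)) x))
      = ∑ k, ∑ i, ∑ j, Amat G i j * (2 * (vderiv (X i) (u k) x * vderiv (X j) (u k) x
        + u k x * vderiv (X i) (vderiv (X j) (u k)) x)) := by
    simp only [Finset.mul_sum]
    rw [Finset.sum_comm (s := (Finset.univ : Finset (Fin n)))]
    refine Finset.sum_congr rfl fun i _ => ?_
    rw [Finset.sum_comm]
  have e2 : ∑ i, α i x * (∑ k, 2 * (u k x * vderiv (X i) (u k) x))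
      = ∑ k, ∑ i, α i x * (2 * (u k x * vderiv (X i) (u k) x)) := by
    simp only [Finset.mul_sum]
    rw [Finset.sum_comm]
  simp only [opL_eq, h2]
  simp only [vd_gamma _ hu]
  rw [e1, e2, Finset.mul_sum, ← Finset.sum_add_distrib, ← Finset.sum_add_distrib]
  refine Finset.sum_congr rfl fun k _ => ?_
  simp only [mul_add, Finset.mul_sum, Finset.sum_add_distrib]
  have e3 : ∀ (F H : Fin m → Fin m → ℝ), (∀ i j, F i j = H i j) →
     ∑ i, ∑ j, F i j = ∑ i, ∑ j, H i j := by
    intro F H h; simp only [h]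
  have e4 : ∀ (F H : Fin m → ℝ), (∀ i, F i = H i) → ∑ i, F i = ∑ i, H i := by
    intro F H h; simp only [h]
  rw [e3 (fun i j => Amat G i j * (2 * (vderiv (X i) (u k) x * vderiv (X j) (u k) x)))
      (fun i j => 2 * (Amat G i j * (vderiv (X i) (u k) x * vderiv (X j) (u k) x)))
      (fun i j => by ring),
    e3 (fun i j => Amat G i j * (2 * (u k x * vderiv (X i) (vderiv (X j) (u k)) x)))
      (fun i j => 2 * u k x * (Amat G i j * vderiv (X i) (vderiv (X j) (u k)) x))
      (fun i j => by ring),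
    e4 (fun i => α i x * (2 * (u k x * vderiv (X i) (u k) x)))
      (fun i => 2 * u k x * (α i x * vderiv (X i) (u k) x)) (fun i => by ring)]
  ring

end CGHelpers

section CGHelpers2


theorem vd_br {N m n : ℕ} {hmn : m ≤ n} {Z : Fin n → (EuclideanSpace ℝ (Fin N)) → (EuclideanSpace ℝ (Fin N))}
    (hZ : ∀ k, ContDiff ℝ (⊤ : ℕ∞) (Z k))
    {c : Fin n → Fin m → Fin n → ((EuclideanSpace ℝ (Fin N)) → ℝ)}
    (hc : ∀ k j p, lieVF (Z k) (Z (Fin.castLE hmn j)) p = ∑ l, c k j l p • Z l p)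
    {g : (EuclideanSpace ℝ (Fin N)) → ℝ} (hg : ContDiff ℝ (⊤ : ℕ∞) g) (k : Fin n) (j : Fin m) :
    vderiv (Z k) (vderiv (Z (Fin.castLE hmn j)) g) = fun x =>
      vderiv (Z (Fin.castLE hmn j)) (vderiv (Z k) g) x + ∑ l, c k j l x * vderiv (Z l) g x := by
  funext x
  rw [vd_comm (hZ _) (hZ _) hg, hc]
  simp [vderiv, map_sum]

theorem vd_triple {N m n : ℕ} {hmn : m ≤ n} {Z : Fin n → (EuclideanSpace ℝ (Fin N)) → (EuclideanSpace ℝ (Fin N))}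
    (hZ : ∀ k, ContDiff ℝ (⊤ : ℕ∞) (Z k))
    {c : Fin n → Fin m → Fin n → ((EuclideanSpace ℝ (Fin N)) → ℝ)}
    (hcs : ∀ k j l, ContDiff ℝ (⊤ : ℕ∞) (c k j l))
    (hc : ∀ k j p, lieVF (Z k) (Z (Fin.castLE hmn j)) p = ∑ l, c k j l p • Z l p)
    {f : (EuclideanSpace ℝ (Fin N)) → ℝ} (hf : ContDiff ℝ (⊤ : ℕ∞) f) (k : Fin n) (i j : Fin m) (x : EuclideanSpace ℝ (Fin N)) :
    vderiv (Z k) (vderiv (Z (Fin.castLE hmn i)) (vderiv (Z (Fin.castLE hmn j)) f)) x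
      = vderiv (Z (Fin.castLE hmn i)) (vderiv (Z (Fin.castLE hmn j)) (vderiv (Z k) f)) x
      + (∑ l, c k i l x * (vderiv (Z (Fin.castLE hmn j)) (vderiv (Z l) f) x
          + ∑ p, c l j p x * vderiv (Z p) f x)
      + ∑ l, (vderiv (Z (Fin.castLE hmn i)) (c k j l) x * vderiv (Z l) f x
          + c k j l x * vderiv (Z (Fin.castLE hmn i)) (vderiv (Z l) f) x)) := by
  have hu : ∀ l, ContDiff ℝ (⊤ : ℕ∞) (vderiv (Z l) f) := fun l => vd_smooth (hZ l) hf
  rw [vd_br hZ hc (hu _)]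
  simp only [vd_br hZ hc hf]
  rw [vd_add _ (vd_smooth (hZ _) (hu k)) (ContDiff.sum fun l _ => (hcs k j l).mul (hu l)),
    vd_sum _ (fun l => (hcs k j l).mul (hu l))]
  rw [Finset.sum_congr rfl (fun l _ => vd_mul _ (hcs k j l) (hu l) x)]
  ring

/-- Coefficients of the mixed first-by-second order terms. -/
noncomputable def Bco {m n : ℕ} (A : Fin m → Fin m → ℝ) (c : Fin n → Fin m → Fin n → ℝ)
    (k : Fin n) (i : Fin m) (l : Fin n) : ℝ :=
  ∑ j, (A j i + A i j) * c k j l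

/-- Coefficients of the first order terms. -/
noncomputable def Eco {m n : ℕ} (A : Fin m → Fin m → ℝ) (c : Fin n → Fin m → Fin n → ℝ)
    (dc : Fin m → Fin n → Fin m → Fin n → ℝ) (a : Fin m → ℝ) (k l : Fin n) : ℝ :=
  (∑ i, ∑ j, A i j * ((∑ p, c k i p * c p j l) + dc i k j l)) + ∑ i, a i * c k i l

/-- The error bound. -/
noncomputable def Mco {m n : ℕ} (δ : ℝ) (A : Fin m → Fin m → ℝ) (c : Fin n → Fin m → Fin n → ℝ)
    (dc : Fin m → Fin n → Fin m → Fin n → ℝ) (a : Fin m → ℝ) (za : Fin n → Fin m → ℝ) : ℝ :=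
  (∑ k, ∑ l, 2 * |Eco A c dc a k l|) + (∑ k, ∑ i, 2 * |za k i|)
    + ∑ k, ∑ i, ∑ l, (n / (2 * δ)) * (Bco A c k i l) ^ 2

/-- The commutator contribution. -/
noncomputable def Sco {m n : ℕ} (hmn : m ≤ n) (A : Fin m → Fin m → ℝ)
    (c : Fin n → Fin m → Fin n → ℝ)
    (dc : Fin m → Fin n → Fin m → Fin n → ℝ) (a : Fin m → ℝ) (za : Fin n → Fin m → ℝ)
    (u : Fin n → ℝ) (V : Fin m → Fin n → ℝ) (k : Fin n) : ℝ :=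
  (∑ i, ∑ j, A i j * ((∑ l, c k i l * (V j l + ∑ p, c l j p * u p))
    + ∑ l, (dc i k j l * u l + c k j l * V i l)))
  + ∑ i, (za k i * u (Fin.castLE hmn i) + a i * ∑ l, c k i l * u l)

theorem Sco_eq {m n : ℕ} (hmn : m ≤ n) (A : Fin m → Fin m → ℝ)
    (c : Fin n → Fin m → Fin n → ℝ)
    (dc : Fin m → Fin n → Fin m → Fin n → ℝ) (a : Fin m → ℝ) (za : Fin n → Fin m → ℝ)
    (u : Fin n → ℝ) (V : Fin m → Fin n → ℝ) (k : Fin n) :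
    Sco hmn A c dc a za u V k = (∑ i, ∑ l, Bco A c k i l * V i l) + (∑ l, Eco A c dc a k l * u l)
      + ∑ i, za k i * u (Fin.castLE hmn i) := by
  have e1 : ∑ i, ∑ j, A i j * ∑ l, c k i l * V j l = ∑ i, ∑ l, (∑ j, A j i * c k j l) * V i l := by
    rw [Finset.sum_comm]
    refine Finset.sum_congr rfl fun i _ => ?_
    simp only [Finset.mul_sum, Finset.sum_mul]
    rw [Finset.sum_comm]
    simp only [mul_assoc]
  have e2 : ∑ i, ∑ j, A i j * ∑ l, c k j l * V i l = ∑ i, ∑ l, (∑ j, A i j * c k j l) * V i l := by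
    refine Finset.sum_congr rfl fun i _ => ?_
    simp only [Finset.mul_sum, Finset.sum_mul]
    rw [Finset.sum_comm]
    simp only [mul_assoc]
  have e3 : ∑ i, ∑ j, A i j * ∑ l, c k i l * ∑ p, c l j p * u p
      = ∑ l, (∑ i, ∑ j, A i j * ∑ p, c k i p * c p j l) * u l := by
    simp only [Finset.sum_mul]
    rw [Finset.sum_comm (s := (Finset.univ : Finset (Fin n)))]
    refine Finset.sum_congr rfl fun i _ => ?_
    rw [Finset.sum_comm (s := (Finset.univ : Finset (Fin n)))]
    refine Finset.sum_congr rfl fun j _ => ?_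
    simp only [Finset.mul_sum, Finset.sum_mul]
    rw [Finset.sum_comm]
    simp only [mul_assoc]
  have e4 : ∑ i, ∑ j, A i j * ∑ l, dc i k j l * u l
      = ∑ l, (∑ i, ∑ j, A i j * dc i k j l) * u l := by
    simp only [Finset.sum_mul]
    rw [Finset.sum_comm (s := (Finset.univ : Finset (Fin n)))]
    refine Finset.sum_congr rfl fun i _ => ?_
    rw [Finset.sum_comm (s := (Finset.univ : Finset (Fin n)))]
    refine Finset.sum_congr rfl fun j _ => ?_
    simp only [Finset.mul_sum, mul_assoc]
  have e5 : ∑ i, a i * ∑ l, c k i l * u l = ∑ l, (∑ i, a i * c k i l) * u l := by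
    simp only [Finset.mul_sum, Finset.sum_mul]
    rw [Finset.sum_comm]
    simp only [mul_assoc]
  unfold Sco Bco Eco
  simp only [mul_add, add_mul, Finset.sum_add_distrib, e1, e2, e3, e4, e5]
  ring

theorem alg_bound {m n : ℕ} (hmn : m ≤ n) (hn : 0 < n) {δ : ℝ} (hδ : 0 < δ)
    (A : Fin m → Fin m → ℝ)
    (hA : ∀ v : Fin m → ℝ, δ * ∑ i, (v i) ^ 2 ≤ ∑ i, ∑ j, A i j * (v i * v j))
    (c : Fin n → Fin m → Fin n → ℝ)
    (dc : Fin m → Fin n → Fin m → Fin n → ℝ) (a : Fin m → ℝ) (za : Fin n → Fin m → ℝ)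
    (u : Fin n → ℝ) (V : Fin m → Fin n → ℝ) :
    ∑ k, (2 * u k * Sco hmn A c dc a za u V k - 2 * ∑ i, ∑ j, A i j * (V i k * V j k))
      ≤ Mco δ A c dc a za * ∑ k, (u k) ^ 2 := by
  set Γ := ∑ k, (u k) ^ 2 with hΓ
  have hle : ∀ k, u k ^ 2 ≤ Γ := fun k =>
    Finset.single_le_sum (f := fun k => u k ^ 2) (fun i _ => sq_nonneg _) (Finset.mem_univ k)
  have huv : ∀ (e : ℝ) k l, 2 * u k * (e * u l) ≤ 2 * |e| * Γ := by
    intro e k l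
    have h1 := hle k
    have h2 := hle l
    have h3 : 2 * u k * (e * u l) ≤ |e| * (2 * |u k * u l|) := by
      have := le_abs_self (e * (u k * u l))
      rw [abs_mul] at this
      linarith
    have h4 : 2 * |u k * u l| ≤ 2 * Γ := by
      rw [abs_mul]
      nlinarith [sq_nonneg (|u k| - |u l|), sq_abs (u k), sq_abs (u l)]
    nlinarith [mul_le_mul_of_nonneg_left h4 (abs_nonneg e)]
  have hnR : (0 : ℝ) < n := by exact_mod_cast hn
  have hB : ∀ (b v : ℝ) k, 2 * u k * (b * v) ≤ n / (2 * δ) * b ^ 2 * Γ + 2 * δ / n * v ^ 2 := by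
    intro b v k
    have h1 : n / (2 * δ) * b ^ 2 * u k ^ 2 ≤ n / (2 * δ) * b ^ 2 * Γ :=
      mul_le_mul_of_nonneg_left (hle k) (by positivity)
    have h2 : n / (2 * δ) * b ^ 2 * u k ^ 2 + 2 * δ / n * v ^ 2 - 2 * u k * (b * v)
        = 2 * δ / n * (v - n / (2 * δ) * b * u k) ^ 2 := by
      field_simp; ring
    have h3 : 0 ≤ 2 * δ / n * (v - n / (2 * δ) * b * u k) ^ 2 := by positivity
    linarith
  have hV : ∑ _k : Fin n, ∑ i, ∑ l, 2 * δ / n * V i l ^ 2 = ∑ k, 2 * (δ * ∑ i, V i k ^ 2) := by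
    rw [Finset.sum_const, Finset.card_univ, Fintype.card_fin, nsmul_eq_mul]
    simp only [Finset.mul_sum]
    rw [Finset.sum_comm]
    refine Finset.sum_congr rfl fun k _ => Finset.sum_congr rfl fun i _ => ?_
    field_simp
  have key : ∀ k, 2 * u k * Sco hmn A c dc a za u V k - 2 * ∑ i, ∑ j, A i j * (V i k * V j k)
      ≤ (∑ i, ∑ l, (n / (2 * δ) * Bco A c k i l ^ 2 * Γ + 2 * δ / n * V i l ^ 2))
        + (∑ l, 2 * |Eco A c dc a k l| * Γ) + (∑ i, 2 * |za k i| * Γ)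
        - 2 * (δ * ∑ i, V i k ^ 2) := by
    intro k
    rw [Sco_eq, mul_add, mul_add]
    have h1 : 2 * u k * ∑ i, ∑ l, Bco A c k i l * V i l
        ≤ ∑ i, ∑ l, (n / (2 * δ) * Bco A c k i l ^ 2 * Γ + 2 * δ / n * V i l ^ 2) := by
      simp only [Finset.mul_sum]
      exact Finset.sum_le_sum fun i _ => Finset.sum_le_sum fun l _ => hB _ _ _
    have h2 : 2 * u k * ∑ l, Eco A c dc a k l * u l ≤ ∑ l, 2 * |Eco A c dc a k l| * Γ := by
      simp only [Finset.mul_sum]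
      exact Finset.sum_le_sum fun i _ => huv _ _ _
    have h3 : 2 * u k * ∑ i, za k i * u (Fin.castLE hmn i) ≤ ∑ i, 2 * |za k i| * Γ := by
      simp only [Finset.mul_sum]
      exact Finset.sum_le_sum fun i _ => huv _ _ _
    have h4 := hA (fun i => V i k)
    linarith
  refine (Finset.sum_le_sum fun k _ => key k).trans (le_of_eq ?_)
  simp only [Finset.sum_add_distrib, Finset.sum_sub_distrib, hV]
  unfold Mco
  simp only [add_mul, Finset.sum_mul]
  ring

/-- Boundedness of a real function. -/
def BddF {E : Type*} (F : E → ℝ) : Prop := ∃ C, ∀ x, |F x| ≤ C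

theorem BddF.const {E : Type*} (a : ℝ) : BddF (fun _ : E => a) := ⟨|a|, fun _ => le_rfl⟩

theorem BddF.add {E : Type*} {F H : E → ℝ} (hF : BddF F) (hH : BddF H) :
    BddF (fun x => F x + H x) := by
  obtain ⟨C, hC⟩ := hF
  obtain ⟨C', hC'⟩ := hH
  exact ⟨C + C', fun x => (abs_add_le _ _).trans (add_le_add (hC x) (hC' x))⟩

theorem BddF.mul {E : Type*} {F H : E → ℝ} (hF : BddF F) (hH : BddF H) :
    BddF (fun x => F x * H x) := by
  obtain ⟨C, hC⟩ := hF
  obtain ⟨C', hC'⟩ := hH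
  refine ⟨C * C', fun x => ?_⟩
  rw [abs_mul]
  exact mul_le_mul (hC x) (hC' x) (abs_nonneg _) ((abs_nonneg _).trans (hC x))

theorem BddF.abs {E : Type*} {F : E → ℝ} (hF : BddF F) : BddF (fun x => |F x|) := by
  obtain ⟨C, hC⟩ := hF
  exact ⟨C, fun x => by rw [abs_abs]; exact hC x⟩

theorem BddF.sum {E ι : Type*} [Fintype ι] {F : ι → E → ℝ} (hF : ∀ i, BddF (F i)) :
    BddF (fun x => ∑ i, F i x) := by
  choose C hC using hF
  exact ⟨∑ i, C i, fun x => (Finset.abs_sum_le_sum_abs _ _).trans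
    (Finset.sum_le_sum fun i _ => hC i x)⟩

theorem exists_pos_le {n : ℕ} (lam : Fin n → ℝ) (hlam : ∀ k, 0 < lam k) :
    ∃ l0 > (0 : ℝ), ∀ k, l0 ≤ lam k := by
  rcases Nat.eq_zero_or_pos n with h | h
  · subst h; exact ⟨1, one_pos, fun k => k.elim0⟩
  · have : Nonempty (Fin n) := ⟨⟨0, h⟩⟩
    obtain ⟨k, hk⟩ := Finite.exists_min lam
    exact ⟨lam k, hlam k, hk⟩

end CGHelpers2

/-- Pointwise Bakry–Émery-type inequality for the complete gradient when the
commutator coefficients `c_{kjl}` are smooth functions rather than constants. -/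
theorem complete_gradient_bound_pointwise_nonconstant
    (N m n : ℕ) (hm : 1 ≤ m) (hmn : m ≤ n)
    (Z : Fin n → (EuclideanSpace ℝ (Fin N) → EuclideanSpace ℝ (Fin N)))
    (hZ : ∀ k, ContDiff ℝ (⊤ : ℕ∞) (Z k))
    (D : EuclideanSpace ℝ (Fin N) → EuclideanSpace ℝ (Fin N))
    (hD : ContDiff ℝ (⊤ : ℕ∞) D)
    (lam : Fin n → ℝ) (hlam : ∀ k, 0 < lam k)
    (hZD : ∀ k p, lieVF (Z k) D p = lam k • Z k p)
    (c : Fin n → Fin m → Fin n → (EuclideanSpace ℝ (Fin N) → ℝ))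
    (hcsmooth : ∀ k j l, ContDiff ℝ (⊤ : ℕ∞) (c k j l))
    (hc : ∀ k j p, lieVF (Z k) (Z (Fin.castLE hmn j)) p = ∑ l, c k j l p • Z l p)
    (G : Matrix (Fin m) (Fin m) ℝ) (δ : ℝ) (hδ : 0 < δ)
    (hG : ∀ v : Fin m → ℝ,
      δ * ∑ i, (v i) ^ 2
        ≤ ∑ i, ∑ j, ((G i j + G j i) / 2 + (if i = j then 1 else 0)) * v i * v j)
    (α : Fin m → EuclideanSpace ℝ (Fin N) → ℝ)
    (hα : ∀ i, ContDiff ℝ (⊤ : ℕ∞) (α i))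
    (hαbd : ∀ i, ∃ C, ∀ x, |α i x| ≤ C)
    (hZαbd : ∀ k i, ∃ C, ∀ x, |vderiv (Z k) (α i) x| ≤ C) :
    (∀ β > (0 : ℝ), ∃ κ : EuclideanSpace ℝ (Fin N) → ℝ, Continuous κ ∧
      ∀ f : EuclideanSpace ℝ (Fin N) → ℝ, ContDiff ℝ (⊤ : ℕ∞) f → ∀ x,
        2 * cGamma2 Z f (opL (fun i => Z (Fin.castLE hmn i)) D G α β f) x
            - opL (fun i => Z (Fin.castLE hmn i)) D G α β (cGamma Z f) x
          ≤ -κ x * cGamma Z f x) ∧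
    (((∀ k j l, ∃ C, ∀ x, |c k j l x| ≤ C) ∧
      (∀ k j l j', ∃ C, ∀ x, |vderiv (Z (Fin.castLE hmn j')) (c k j l) x| ≤ C)) →
      ∃ b₀ > (0 : ℝ), ∀ β > b₀, ∃ κ : EuclideanSpace ℝ (Fin N) → ℝ, Continuous κ ∧
        (∃ ε > (0 : ℝ), ∀ x, ε ≤ κ x) ∧
        ∀ f : EuclideanSpace ℝ (Fin N) → ℝ, ContDiff ℝ (⊤ : ℕ∞) f → ∀ x,
          2 * cGamma2 Z f (opL (fun i => Z (Fin.castLE hmn i)) D G α β f) x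
              - opL (fun i => Z (Fin.castLE hmn i)) D G α β (cGamma Z f) x
            ≤ -κ x * cGamma Z f x) := by
  have hn : 0 < n := lt_of_lt_of_le hm hmn
  obtain ⟨l0, hl0, hl0le⟩ := exists_pos_le lam hlam
  have hX : ∀ i : Fin m, ContDiff ℝ (⊤ : ℕ∞) ((fun i => Z (Fin.castLE hmn i)) i) :=
    fun i => hZ _
  have hA : ∀ v : Fin m → ℝ, δ * ∑ i, (v i) ^ 2 ≤ ∑ i, ∑ j, Amat G i j * (v i * v j) := by
    intro v
    refine (hG v).trans (le_of_eq ?_)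
    have e1 : ∑ i, ∑ j, G j i * (v i * v j) = ∑ i, ∑ j, G i j * (v i * v j) := by
      rw [Finset.sum_comm]
      refine Finset.sum_congr rfl fun i _ => Finset.sum_congr rfl fun j _ => ?_
      ring
    have e2 : ∀ i j, ((G i j + G j i) / 2 + (if i = j then (1 : ℝ) else 0)) * v i * v j
        = 2⁻¹ * (G i j * (v i * v j)) + 2⁻¹ * (G j i * (v i * v j))
          + (if i = j then (1 : ℝ) else 0) * (v i * v j) := by
      intro i j; ring
    simp only [e2, Amat, add_mul (G _ _), Finset.sum_add_distrib, ← Finset.mul_sum, e1]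
    ring
  let M : EuclideanSpace ℝ (Fin N) → ℝ := fun x =>
    Mco δ (Amat G) (fun k j l => c k j l x)
      (fun i k j l => vderiv (Z (Fin.castLE hmn i)) (c k j l) x)
      (fun i => α i x) (fun k i => vderiv (Z k) (α i) x)
  have hMc : Continuous M := by
    have h1 : ∀ k j l, Continuous (c k j l) := fun k j l => (hcsmooth k j l).continuous
    have h2 : ∀ i k j l, Continuous (vderiv (Z (Fin.castLE hmn i)) (c k j l)) :=
      fun i k j l => (vd_smooth (hZ _) (hcsmooth k j l)).continuous
    have h3 : ∀ i, Continuous (α i) := fun i => (hα i).continuous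
    have h4 : ∀ k i, Continuous (vderiv (Z k) (α i)) :=
      fun k i => (vd_smooth (hZ _) (hα i)).continuous
    simp only [M, Mco, Eco, Bco]
    fun_prop
  have core : ∀ β > (0 : ℝ), ∀ f : EuclideanSpace ℝ (Fin N) → ℝ,
      ContDiff ℝ (⊤ : ℕ∞) f → ∀ x,
        2 * cGamma2 Z f (opL (fun i => Z (Fin.castLE hmn i)) D G α β f) x
            - opL (fun i => Z (Fin.castLE hmn i)) D G α β (cGamma Z f) x
          ≤ -(2 * β * l0 - M x) * cGamma Z f x := by
    intro β hβ f hf x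
    have hu : ∀ l, ContDiff ℝ (⊤ : ℕ∞) (vderiv (Z l) f) := fun l => vd_smooth (hZ l) hf
    have hcomm : ∀ k, vderiv (Z k) (opL (fun i => Z (Fin.castLE hmn i)) D G α β f) x
        = opL (fun i => Z (Fin.castLE hmn i)) D G α β (vderiv (Z k) f) x
          + Sco hmn (Amat G) (fun k j l => c k j l x)
            (fun i k j l => vderiv (Z (Fin.castLE hmn i)) (c k j l) x)
            (fun i => α i x) (fun k i => vderiv (Z k) (α i) x)
            (fun k => vderiv (Z k) f x)
            (fun i k => vderiv (Z (Fin.castLE hmn i)) (vderiv (Z k) f) x) k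
          - β * (lam k * vderiv (Z k) f x) := by
      intro k
      have hDk : vderiv (Z k) (vderiv D f) x
          = vderiv D (vderiv (Z k) f) x + lam k * vderiv (Z k) f x := by
        rw [vd_comm (hZ k) hD hf, hZD]
        simp [vderiv]
      rw [vd_opL G β hX hD hα hf, hDk, opL_eq]
      rw [Finset.sum_congr rfl (fun i _ => Finset.sum_congr rfl (fun j _ =>
        congrArg (fun t => Amat G i j * t) (vd_triple hZ hcsmooth hc hf k i j x)))]
      rw [Finset.sum_congr rfl (fun i _ =>
        congrArg (fun t => vderiv (Z k) (α i) x * vderiv (Z (Fin.castLE hmn i)) f x + α i x * t)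
          (congrFun (vd_br hZ hc hf k i) x))]
      unfold Sco
      simp only [mul_add (Amat G _ _) (vderiv _ _ _), mul_add (α _ _) (vderiv _ _ _),
        Finset.sum_add_distrib]
      ring
    have hal := alg_bound hmn hn hδ (Amat G) hA (fun k j l => c k j l x)
      (fun i k j l => vderiv (Z (Fin.castLE hmn i)) (c k j l) x)
      (fun i => α i x) (fun k i => vderiv (Z k) (α i) x)
      (fun k => vderiv (Z k) f x)
      (fun i k => vderiv (Z (Fin.castLE hmn i)) (vderiv (Z k) f) x)
    have hgam := opL_gamma (D := D) G α β hX hu x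
    have hlamsum : l0 * ∑ k, (vderiv (Z k) f x) ^ 2 ≤ ∑ k, lam k * (vderiv (Z k) f x) ^ 2 := by
      rw [Finset.mul_sum]
      exact Finset.sum_le_sum fun k _ => mul_le_mul_of_nonneg_right (hl0le k) (sq_nonneg _)
    have hlam2 := mul_le_mul_of_nonneg_left hlamsum (by positivity : (0 : ℝ) ≤ 2 * β)
    have heq : 2 * cGamma2 Z f (opL (fun i => Z (Fin.castLE hmn i)) D G α β f) x
            - opL (fun i => Z (Fin.castLE hmn i)) D G α β (cGamma Z f) x
        = ∑ k, (2 * vderiv (Z k) f x * Sco hmn (Amat G) (fun k j l => c k j l x)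
            (fun i k j l => vderiv (Z (Fin.castLE hmn i)) (c k j l) x)
            (fun i => α i x) (fun k i => vderiv (Z k) (α i) x)
            (fun k => vderiv (Z k) f x)
            (fun i k => vderiv (Z (Fin.castLE hmn i)) (vderiv (Z k) f) x) k
            - 2 * ∑ i, ∑ j, Amat G i j * (vderiv (Z (Fin.castLE hmn i)) (vderiv (Z k) f) x
              * vderiv (Z (Fin.castLE hmn j)) (vderiv (Z k) f) x))
          - 2 * β * ∑ k, lam k * (vderiv (Z k) f x) ^ 2 := by
      have hgam' : opL (fun i => Z (Fin.castLE hmn i)) D G α β (cGamma Z f) x = _ := hgam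
      rw [hgam']
      unfold cGamma2
      simp only [hcomm]
      rw [Finset.mul_sum, Finset.mul_sum, ← Finset.sum_sub_distrib, ← Finset.sum_sub_distrib]
      refine Finset.sum_congr rfl fun k _ => ?_
      ring
    rw [heq]
    have hM : -(2 * β * l0 - M x) * cGamma Z f x
        = M x * (∑ k, (vderiv (Z k) f x) ^ 2)
          - 2 * β * (l0 * ∑ k, (vderiv (Z k) f x) ^ 2) := by
      unfold cGamma; ring
    rw [hM]
    exact sub_le_sub hal hlam2
  refine ⟨fun β hβ => ⟨fun x => 2 * β * l0 - M x, by fun_prop, core β hβ⟩, ?_⟩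
  rintro ⟨hcb, hdcb⟩
  have hMb : BddF M := by
    have hE : ∀ k l, BddF (fun x => Eco (Amat G) (fun k j l => c k j l x)
        (fun i k j l => vderiv (Z (Fin.castLE hmn i)) (c k j l) x) (fun i => α i x) k l) := by
      intro k l
      unfold Eco
      refine BddF.add (BddF.sum fun i => BddF.sum fun j => (BddF.const _).mul
        (BddF.add (BddF.sum fun p => BddF.mul (hcb _ _ _) (hcb _ _ _)) (hdcb _ _ _ _))) ?_
      exact BddF.sum fun i => BddF.mul (hαbd i) (hcb _ _ _)
    have hB : ∀ k i l, BddF (fun x => Bco (Amat G) (fun k j l => c k j l x) k i l) := by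
      intro k i l
      unfold Bco
      exact BddF.sum fun j => (BddF.const _).mul (hcb _ _ _)
    simp only [M, Mco, pow_two]
    refine BddF.add (BddF.add ?_ ?_) ?_
    · exact BddF.sum fun k => BddF.sum fun l => (BddF.const _).mul (hE k l).abs
    · exact BddF.sum fun k => BddF.sum fun i => (BddF.const _).mul (BddF.abs (hZαbd k i))
    · exact BddF.sum fun k => BddF.sum fun i => BddF.sum fun l =>
        (BddF.const _).mul ((hB k i l).mul (hB k i l))
  obtain ⟨C, hC⟩ := hMb
  have hb0 : 0 < (|C| + 1) / (2 * l0) := by positivity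
  refine ⟨(|C| + 1) / (2 * l0), hb0, fun β hβ =>
    ⟨fun x => 2 * β * l0 - M x, by fun_prop, ⟨1, one_pos, fun x => ?_⟩,
      core β (hb0.trans hβ)⟩⟩
  have h1 : |C| + 1 < β * (2 * l0) := (div_lt_iff₀ (by positivity)).1 hβ
  have h2 := le_abs_self (M x)
  have h3 := hC x
  have h4 := le_abs_self C
  show 1 ≤ 2 * β * l0 - M x
  linarith
end

section
/- Let d ≥ 1 and R ≥ 1 be natural numbers, let M, S ≥ 0 be reals, and let Λ ⊆ ℤᵈ be nonempty. For each k ∈ ℤᵈ let u_k : [0,∞) → ℝ be continuous with 0 ≤ u_k(t) ≤ S for all t ≥ 0, and suppose that for every k ∉ Λ and every t ≥ 0, u_k(t) ≤ M · ∑_{j ∈ ℤᵈ, |j−k|₁ ≤ R} ∫₀ᵗ u_j(s) ds. Then for every k ∈ ℤᵈ, every N ∈ ℕ with N·R ≤ dist₁(k, Λ), and every t ≥ 0, u_k(t) ≤ (M(2R+1)ᵈ)ᴺ · tᴺ / N! · S. -/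
open scoped BigOperators

/-- The ℓ¹-ball of radius `R` around `k` in `ℤᵈ`, as a `Finset`. -/
noncomputable def ball1 (d R : ℕ) (k : Fin d → ℤ) : Finset (Fin d → ℤ) :=
  (Fintype.piFinset fun i => Finset.Icc (k i - R) (k i + R)).filter
    fun j => (∑ i, |j i - k i|) ≤ (R : ℤ)

/-- Iteration lemma at the core of the finite speed of propagation estimate. -/
theorem finite_speed_iteration
    (d R : ℕ) (hd : 1 ≤ d) (hR : 1 ≤ R)
    (M S : ℝ) (hM : 0 ≤ M) (hS : 0 ≤ S)
    (Λ : Set (Fin d → ℤ)) (hΛ : Λ.Nonempty)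
    (u : (Fin d → ℤ) → ℝ → ℝ)
    (hcont : ∀ k, ContinuousOn (u k) (Set.Ici (0 : ℝ)))
    (hbd : ∀ k, ∀ t ≥ (0 : ℝ), 0 ≤ u k t ∧ u k t ≤ S)
    (hrec : ∀ k ∉ Λ, ∀ t ≥ (0 : ℝ),
      u k t ≤ M * ∑ j ∈ ball1 d R k, ∫ s in (0 : ℝ)..t, u j s) :
    ∀ (k : Fin d → ℤ) (N : ℕ),
      (∀ l ∈ Λ, ((N * R : ℕ) : ℤ) ≤ ∑ i, |k i - l i|) →
      ∀ t ≥ (0 : ℝ),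
        u k t ≤ (M * (2 * R + 1) ^ d) ^ N * t ^ N / (N.factorial : ℝ) * S := by
  intro k N
  induction N generalizing k with
  | zero =>
    intro _ t ht
    simpa using (hbd k t ht).2
  | succ N ih =>
    intro hk t ht
    have hkΛ : k ∉ Λ := by
      intro h
      have h1 := hk k h
      simp only [sub_self, abs_zero, Finset.sum_const_zero] at h1
      have h2 : 0 < (N + 1) * R := Nat.mul_pos (Nat.succ_pos N) hR
      have h3 : (0 : ℤ) < (((N + 1) * R : ℕ) : ℤ) := by exact_mod_cast h2
      omega
    set C : ℝ := M * (2 * R + 1) ^ d with hC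
    have hC0 : 0 ≤ C := by positivity
    have hj : ∀ j ∈ ball1 d R k, ∫ s in (0 : ℝ)..t, u j s ≤
        C ^ N * t ^ (N + 1) / ((N + 1).factorial : ℝ) * S := by
      intro j hj
      have hjR : (∑ i, |j i - k i|) ≤ (R : ℤ) := (Finset.mem_filter.mp hj).2
      have hjl : ∀ l ∈ Λ, ((N * R : ℕ) : ℤ) ≤ ∑ i, |j i - l i| := by
        intro l hl
        have h1 := hk l hl
        have h2 : ∑ i, |k i - l i| ≤ ∑ i, |j i - k i| + ∑ i, |j i - l i| := by
          rw [← Finset.sum_add_distrib]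
          refine Finset.sum_le_sum fun i _ => ?_
          have := abs_sub_le (k i) (j i) (l i)
          rwa [abs_sub_comm (k i) (j i)] at this
        push_cast at h1 ⊢
        linarith
      have hmono : ∫ s in (0 : ℝ)..t, u j s ≤
          ∫ s in (0 : ℝ)..t, (C ^ N / (N.factorial : ℝ) * S) * s ^ N := by
        refine intervalIntegral.integral_mono_on ht ?_ ?_ ?_
        · refine ContinuousOn.intervalIntegrable ((hcont j).mono ?_)
          rw [Set.uIcc_of_le ht]
          exact Set.Icc_subset_Ici_self
        · exact Continuous.intervalIntegrable (by fun_prop) _ _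
        · intro s hs
          refine (ih j hjl s hs.1).trans (le_of_eq ?_)
          ring
      refine hmono.trans (le_of_eq ?_)
      rw [intervalIntegral.integral_const_mul, integral_pow, Nat.factorial_succ]
      have : (N.factorial : ℝ) ≠ 0 := by positivity
      push_cast
      field_simp
      simp
    have hcard : ((ball1 d R k).card : ℝ) ≤ (2 * R + 1) ^ d := by
      have h : (ball1 d R k).card ≤ (2 * R + 1) ^ d := by
        refine (Finset.card_filter_le _ _).trans (le_of_eq ?_)
        rw [Fintype.card_piFinset]
        have : ∀ i, (Finset.Icc (k i - R) (k i + R)).card = 2 * R + 1 := by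
          intro i
          rw [Int.card_Icc]
          omega
        simp [-Int.card_Icc, this]
      exact_mod_cast h
    set B : ℝ := C ^ N * t ^ (N + 1) / ((N + 1).factorial : ℝ) * S with hB
    have hB0 : 0 ≤ B := by
      have : (0 : ℝ) ≤ t := ht
      positivity
    calc u k t ≤ M * ∑ j ∈ ball1 d R k, ∫ s in (0 : ℝ)..t, u j s := hrec k hkΛ t ht
      _ ≤ M * ∑ j ∈ ball1 d R k, B := by
        gcongr with j hjm
        exact hj j hjm
      _ = M * ((ball1 d R k).card * B) := by rw [Finset.sum_const, nsmul_eq_mul]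
      _ ≤ M * ((2 * R + 1) ^ d * B) := by gcongr
      _ = C ^ (N + 1) * t ^ (N + 1) / ((N + 1).factorial : ℝ) * S := by
        rw [hB, pow_succ C N, hC]; ring
end

section
/- Let d ≥ 1 and R ≥ 1 be natural numbers, let M, S ≥ 0 be reals, and let Λ ⊆ ℤᵈ be nonempty. For each k ∈ ℤᵈ let u_k : [0,∞) → ℝ be continuous with 0 ≤ u_k(t) ≤ S for all t ≥ 0, and suppose that for every k ∉ Λ and every t ≥ 0, u_k(t) ≤ M · ∑_{j ∈ ℤᵈ, |j−k|₁ ≤ R} ∫₀ᵗ u_j(s) ds. Then for every σ > 0 there exists τ ≥ 1 such that for all t > 0 and all k ∈ ℤᵈ, if N := ⌊dist₁(k, Λ)/R⌋ satisfies N ≥ τ·t, then u_k(t) ≤ e^{−σN − σt} · S. -/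
open scoped BigOperators

/-- The ℓ¹-distance `dist₁(k, Λ) = inf{|k − l|₁ : l ∈ Λ}` as a natural number. -/
noncomputable def dist1 (d : ℕ) (k : Fin d → ℤ) (Λ : Set (Fin d → ℤ)) : ℕ :=
  sInf {n : ℕ | ∃ l ∈ Λ, (n : ℤ) = ∑ i, |k i - l i|}

theorem dist1_set_nonempty (d : ℕ) (k : Fin d → ℤ) (Λ : Set (Fin d → ℤ)) (hΛ : Λ.Nonempty) :
    {n : ℕ | ∃ l ∈ Λ, (n : ℤ) = ∑ i, |k i - l i|}.Nonempty := by
  obtain ⟨l, hl⟩ := hΛ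
  refine ⟨(∑ i, |k i - l i|).toNat, l, hl, ?_⟩
  exact Int.toNat_of_nonneg (Finset.sum_nonneg fun i _ => abs_nonneg _)

theorem dist1_le (d : ℕ) (k l : Fin d → ℤ) (Λ : Set (Fin d → ℤ)) (hl : l ∈ Λ) :
    (dist1 d k Λ : ℤ) ≤ ∑ i, |k i - l i| := by
  have h0 : 0 ≤ ∑ i, |k i - l i| := Finset.sum_nonneg fun i _ => abs_nonneg _
  have : dist1 d k Λ ≤ (∑ i, |k i - l i|).toNat :=
    Nat.sInf_le ⟨l, hl, Int.toNat_of_nonneg h0⟩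
  omega

theorem dist1_le_add (d R : ℕ) (k j : Fin d → ℤ) (Λ : Set (Fin d → ℤ)) (hΛ : Λ.Nonempty)
    (hj : j ∈ ball1 d R k) : dist1 d k Λ ≤ dist1 d j Λ + R := by
  obtain ⟨l, hl, he⟩ := Nat.sInf_mem (dist1_set_nonempty d j Λ hΛ)
  change (dist1 d j Λ : ℤ) = _ at he
  have h1 := dist1_le d k l Λ hl
  have h2 : (∑ i, |j i - k i|) ≤ (R : ℤ) := (Finset.mem_filter.mp hj).2
  have h3 : ∑ i, |k i - l i| ≤ ∑ i, |j i - k i| + ∑ i, |j i - l i| := by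
    rw [← Finset.sum_add_distrib]
    refine Finset.sum_le_sum fun i _ => ?_
    rw [abs_sub_comm (j i) (k i)]
    exact abs_sub_le _ _ _
  omega

theorem ball1_card_le (d R : ℕ) (k : Fin d → ℤ) : (ball1 d R k).card ≤ (2 * R + 1) ^ d := by
  refine (Finset.card_filter_le _ _).trans ?_
  rw [Fintype.card_piFinset]
  have : ∀ i, (Finset.Icc (k i - R) (k i + R)).card = 2 * R + 1 := by
    intro i
    rw [Int.card_Icc]
    omega
  simp [this]

theorem integral_exp_mul_le (c : ℝ) (hc : 0 < c) (t : ℝ) :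
    ∫ s in (0 : ℝ)..t, Real.exp (c * s) ≤ Real.exp (c * t) / c := by
  rw [intervalIntegral.integral_comp_mul_left (fun x => Real.exp x) hc.ne', integral_exp]
  simp only [mul_zero, Real.exp_zero, smul_eq_mul]
  rw [div_eq_inv_mul]
  have := inv_pos.mpr hc
  nlinarith

/-- Finite speed of propagation of information: exponential decay of `u_k(t)`
when `N = ⌊dist₁(k,Λ)/R⌋ ≥ τ·t`. -/
theorem finite_speed_of_propagation
    (d R : ℕ) (hd : 1 ≤ d) (hR : 1 ≤ R)
    (M S : ℝ) (hM : 0 ≤ M) (hS : 0 ≤ S)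
    (Λ : Set (Fin d → ℤ)) (hΛ : Λ.Nonempty)
    (u : (Fin d → ℤ) → ℝ → ℝ)
    (hcont : ∀ k, ContinuousOn (u k) (Set.Ici (0 : ℝ)))
    (hbd : ∀ k, ∀ t ≥ (0 : ℝ), 0 ≤ u k t ∧ u k t ≤ S)
    (hrec : ∀ k ∉ Λ, ∀ t ≥ (0 : ℝ),
      u k t ≤ M * ∑ j ∈ ball1 d R k, ∫ s in (0 : ℝ)..t, u j s) :
    ∀ σ > (0 : ℝ), ∃ τ : ℝ, 1 ≤ τ ∧
      ∀ t > (0 : ℝ), ∀ k : Fin d → ℤ,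
        τ * t ≤ ((dist1 d k Λ / R : ℕ) : ℝ) →
        u k t ≤ Real.exp (-σ * ((dist1 d k Λ / R : ℕ) : ℝ) - σ * t) * S := by
  intro σ hσ
  set B : ℝ := (2 * R + 1) ^ d with hB
  have hB0 : 0 ≤ B := by positivity
  set c : ℝ := M * B * Real.exp (2 * σ) + 1 with hc
  have hc0 : 0 < c := by positivity
  have key : ∀ n : ℕ, ∀ k, n * R ≤ dist1 d k Λ → ∀ t ≥ (0 : ℝ),
      u k t ≤ S * Real.exp (-(2 * σ) * n) * Real.exp (c * t) := by
    intro n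
    induction n with
    | zero =>
      intro k _ t ht
      have h1 : 1 ≤ Real.exp (c * t) := Real.one_le_exp (by positivity)
      have := (hbd k t ht).2
      simp only [Nat.cast_zero, mul_zero, Real.exp_zero, mul_one]
      nlinarith
    | succ n ih =>
      intro k hk t ht
      have hkΛ : k ∉ Λ := by
        intro hmem
        have := dist1_le d k k Λ hmem
        simp at this
        rw [this] at hk
        have : 0 < (n + 1) * R := by positivity
        omega
      refine (hrec k hkΛ t ht).trans ?_
      set A : ℝ := S * Real.exp (-(2 * σ) * n) with hA
      have hA0 : 0 ≤ A := by positivity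
      have hint : ∀ j ∈ ball1 d R k, ∫ s in (0 : ℝ)..t, u j s ≤ A * (Real.exp (c * t) / c) := by
        intro j hj
        have hdj := dist1_le_add d R k j Λ hΛ hj
        have hnj : n * R ≤ dist1 d j Λ := by
          rw [Nat.succ_mul] at hk
          omega
        calc ∫ s in (0 : ℝ)..t, u j s ≤ ∫ s in (0 : ℝ)..t, A * Real.exp (c * s) := by
              refine intervalIntegral.integral_mono_on ht ?_ ?_ ?_
              · refine ContinuousOn.intervalIntegrable ((hcont j).mono ?_)
                rw [Set.uIcc_of_le ht]
                exact Set.Icc_subset_Ici_self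
              · exact Continuous.intervalIntegrable (by fun_prop) _ _
              · intro s hs
                exact ih j hnj s hs.1
          _ = A * ∫ s in (0 : ℝ)..t, Real.exp (c * s) := by
              rw [intervalIntegral.integral_const_mul]
          _ ≤ _ := mul_le_mul_of_nonneg_left (integral_exp_mul_le c hc0 t) hA0
      have hsum := Finset.sum_le_card_nsmul _ _ _ hint
      rw [nsmul_eq_mul] at hsum
      have hcard : ((ball1 d R k).card : ℝ) ≤ B := by
        rw [hB]
        exact_mod_cast ball1_card_le d R k
      have hX : 0 ≤ A * (Real.exp (c * t) / c) := by positivity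
      have hMB : M * B / c ≤ Real.exp (-(2 * σ)) := by
        rw [div_le_iff₀ hc0, hc, mul_add, mul_comm (M * B), ← mul_assoc, ← Real.exp_add]
        simp only [neg_add_cancel, Real.exp_zero, one_mul, mul_one]
        have := Real.exp_pos (-(2 * σ))
        linarith
      calc M * ∑ j ∈ ball1 d R k, ∫ s in (0 : ℝ)..t, u j s
          ≤ M * (B * (A * (Real.exp (c * t) / c))) :=
            mul_le_mul_of_nonneg_left
              (hsum.trans (mul_le_mul_of_nonneg_right hcard hX)) hM
        _ = (M * B / c) * (A * Real.exp (c * t)) := by ring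
        _ ≤ Real.exp (-(2 * σ)) * (A * Real.exp (c * t)) :=
            mul_le_mul_of_nonneg_right hMB (by positivity)
        _ = S * Real.exp (-(2 * σ) * ((n + 1 : ℕ) : ℝ)) * Real.exp (c * t) := by
            rw [hA, Nat.cast_succ, mul_add, mul_one, Real.exp_add]
            ring
  refine ⟨1 + (c + σ) / σ, by have : 0 < (c + σ) / σ := by positivity
                              linarith, ?_⟩
  intro t ht k hN
  refine (key _ k (Nat.div_mul_le_self _ _) t ht.le).trans ?_
  set N : ℝ := ((dist1 d k Λ / R : ℕ) : ℝ) with hNdef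
  rw [mul_assoc, ← Real.exp_add, mul_comm]
  refine mul_le_mul_of_nonneg_right (Real.exp_le_exp.mpr ?_) hS
  have h1 : (1 + (c + σ) / σ) * t * σ ≤ N * σ := mul_le_mul_of_nonneg_right hN hσ.le
  have h2 : (1 + (c + σ) / σ) * t * σ = σ * t + (c + σ) * t := by field_simp
  have h3 : 0 < σ * t := by positivity
  linarith
end
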